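/- Let f : ℝ → ℝ be continuous with f(t) ≥ 0 for all t, and suppose that for every k ∈ ℕ the integral ∫_{t₀+2k}^{t₀+2(k+1)} f(t) φ(t - 1 - t₀ - 2k) dt is strictly positive, where φ is the standard smooth bump supported on (-1,1). Then for every K ∈ ℝ there exists an infinitely differentiable function ψ : ℝ → ℝ with ψ(t) = 0 for all t ≤ t₀ such that -∫_{t₀}^{t₀+2N} f(t) ψ(t) dt > K for some positive integer N. -/

import Mathlib

/-!
One bump suffices: `φ (· - 1 - t₀ - 2k)` is smooth and lives in `(t₀ + 2k, t₀ + 2(k + 1))`, so as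
soon as its integral against `f` is nonzero, a constant multiple of it has any prescribed integral
against `f`, and that integral is already attained over `[t₀, t₀ + 2(k + 1)]`.
-/

open Function MeasureTheory Set

/-- The standard bump `exp (1 / (t² - 1))` on `(-1, 1)`, extended by zero. It is written as
`exp (-1 / s)`, extended by zero to `s ≤ 0`, at `s = 1 - t²`, so that smoothness across `±1` is
inherited from `expNegInvGlue`. -/
noncomputable def standardBump (t : ℝ) : ℝ :=
  expNegInvGlue (1 - t ^ 2)

theorem one_sub_sq_pos_iff {t : ℝ} : 0 < 1 - t ^ 2 ↔ -1 < t ∧ t < 1 := by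
  rw [sub_pos, sq_lt_one_iff_abs_lt_one, abs_lt]

theorem standardBump_eq_ite (t : ℝ) :
    standardBump t = if -1 < t ∧ t < 1 then Real.exp (1 / (t ^ 2 - 1)) else 0 := by
  have exponent_eq : -(1 - t ^ 2)⁻¹ = 1 / (t ^ 2 - 1) := by
    rw [← inv_neg, neg_sub, one_div]
  simp only [standardBump, expNegInvGlue, ← one_sub_sq_pos_iff, ← not_lt, ite_not, exponent_eq]

theorem contDiff_standardBump {n : ℕ∞} : ContDiff ℝ n standardBump :=
  expNegInvGlue.contDiff.comp (by fun_prop)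

theorem support_standardBump : support standardBump = Ioo (-1) 1 := by
  ext t
  rw [mem_support, standardBump, Ne, expNegInvGlue.zero_iff_nonpos, not_le, one_sub_sq_pos_iff,
    mem_Ioo]

theorem support_standardBump_sub (c : ℝ) :
    support (fun t ↦ standardBump (t - c)) = Ioo (c - 1) (c + 1) := by
  change (· - c) ⁻¹' support standardBump = _
  rw [support_standardBump, preimage_sub_const_Ioo, neg_add_eq_sub, add_comm 1 c]

theorem exists_contDiff_integral_mul_eq {E 𝕜 : Type*} [NormedAddCommGroup E] [NormedSpace ℝ E]
    [MeasurableSpace E] [RCLike 𝕜] {μ : Measure E} {n : WithTop ℕ∞} {f g : E → 𝕜}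
    (hg : ContDiff ℝ n g) (hfg : ∫ x, f x * g x ∂μ ≠ 0) (y : 𝕜) :
    ∃ ψ : E → 𝕜, ContDiff ℝ n ψ ∧ support ψ ⊆ support g ∧ ∫ x, f x * ψ x ∂μ = y := by
  refine ⟨fun x ↦ y / (∫ x, f x * g x ∂μ) * g x, contDiff_const.mul hg,
    support_mul_subset_right _ _, ?_⟩
  simp only [mul_left_comm (f _)]
  rw [integral_const_mul, div_mul_cancel₀ y hfg]

theorem exists_contDiff_support_subset_Ioo_integral_mul_eq {f : ℝ → ℝ} {c : ℝ}
    (hf : ∫ t in (c - 1)..(c + 1), f t * standardBump (t - c) ≠ 0) (y : ℝ) :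
    ∃ ψ : ℝ → ℝ, ContDiff ℝ (⊤ : ℕ∞) ψ ∧ support ψ ⊆ Ioo (c - 1) (c + 1) ∧
      ∫ t, f t * ψ t = y := by
  rw [intervalIntegral.integral_eq_integral_of_support_subset
    ((support_mul_subset_right _ _).trans
      ((support_standardBump_sub c).subset.trans Ioo_subset_Ioc_self))] at hf
  rw [← support_standardBump_sub c]
  exact exists_contDiff_integral_mul_eq (contDiff_standardBump.comp (by fun_prop)) hf y

theorem stmt_19_general (f : ℝ → ℝ) (t₀ : ℝ) (phi : ℝ → ℝ)
    (hphi : ∀ t : ℝ, phi t = if -1 < t ∧ t < 1 then Real.exp (1 / (t ^ 2 - 1)) else 0)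
    (k : ℕ)
    (hk : ∫ t in (t₀ + 2 * k)..(t₀ + 2 * (k + 1)), f t * phi (t - 1 - t₀ - 2 * k) ≠ 0) :
    ∀ K : ℝ, ∃ ψ : ℝ → ℝ, ContDiff ℝ (⊤ : ℕ∞) ψ ∧ (∀ t ≤ t₀, ψ t = 0) ∧
      ∃ N : ℕ, 0 < N ∧ K < -∫ t in t₀..(t₀ + 2 * N), f t * ψ t := by
  intro K
  have phi_eq (t : ℝ) : phi (t - 1 - t₀ - 2 * k) = standardBump (t - (t₀ + 2 * k + 1)) := by
    rw [hphi, ← standardBump_eq_ite]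
    congr 1
    ring
  have right_end : t₀ + 2 * ((k : ℝ) + 1) = t₀ + 2 * k + 1 + 1 := by ring
  have integral_bump_ne_zero : ∫ t in (t₀ + 2 * k + 1 - 1)..(t₀ + 2 * k + 1 + 1),
      f t * standardBump (t - (t₀ + 2 * k + 1)) ≠ 0 := by
    simpa only [phi_eq, right_end, add_sub_cancel_right] using hk
  obtain ⟨ψ, ψ_smooth, support_ψ, integral_ψ⟩ :=
    exists_contDiff_support_subset_Ioo_integral_mul_eq integral_bump_ne_zero (-(K + 1))
  have support_ψ_subset : support ψ ⊆ Ioc t₀ (t₀ + 2 * (k + 1 : ℕ)) := by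
    rw [Nat.cast_succ, right_end]
    exact support_ψ.trans (Ioo_subset_Ioc_self.trans (Ioc_subset_Ioc_left (by simp)))
  refine ⟨ψ, ψ_smooth, fun t ht ↦ notMem_support.1 fun h ↦ ht.not_gt (support_ψ_subset h).1,
    k + 1, k.succ_pos, ?_⟩
  rw [intervalIntegral.integral_eq_integral_of_support_subset
    ((support_mul_subset_right f ψ).trans support_ψ_subset), integral_ψ]
  linarith

theorem stmt_19 (f : ℝ → ℝ) (hf : Continuous f) (hf0 : ∀ t, 0 ≤ f t) (t₀ : ℝ)
    (phi : ℝ → ℝ)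
    (hphi : ∀ t : ℝ, phi t = if -1 < t ∧ t < 1 then Real.exp (1 / (t ^ 2 - 1)) else 0)
    (hpos : ∀ k : ℕ,
      0 < ∫ t in (t₀ + 2 * k)..(t₀ + 2 * (k + 1)), f t * phi (t - 1 - t₀ - 2 * k)) :
    ∀ K : ℝ, ∃ ψ : ℝ → ℝ, ContDiff ℝ (⊤ : ℕ∞) ψ ∧ (∀ t ≤ t₀, ψ t = 0) ∧
      ∃ N : ℕ, 0 < N ∧ K < -∫ t in t₀..(t₀ + 2 * N), f t * ψ t :=
  stmt_19_general f t₀ phi hphi 0 (hpos 0).ne'
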